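/- Let G be a finite group and H ≤ G a subgroup. Let λ : G → U(ℓ²(G)) be the left regular representation (λ(g)δ_h = δ_{gh}), let L(G) = span{λ(g) : g ∈ G} and L(H) = span{λ(h) : h ∈ H}, viewed as unital *-subalgebras of B(ℓ²(G)) ≅ M_{|G|}. Then D(L(G)‖L(H)) = log [G : H]. -/

import Mathlib

open scoped ENNReal Classical ComplexOrder
open Matrix

noncomputable section

namespace GJL

variable {n : Type*} [Fintype n] [DecidableEq n]

/-- `Mat n` is the matrix *-algebra with rows and columns indexed by `n`. -/
abbrev Mat (n : Type*) [Fintype n] [DecidableEq n] := Matrix n n ℂ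

/-- A density matrix: positive semidefinite with trace one. -/
def IsDensity (ρ : Mat n) : Prop := ρ.PosSemidef ∧ ρ.trace = 1

/-- The real part of the (matrix) trace. -/
def traceR (A : Mat n) : ℝ := (A.trace).re

/-- Real matrix powers via the continuous functional calculus.  For positive
semidefinite matrices and negative exponents this is the generalized inverse
power on the support, since `(0 : ℝ) ^ r = 0` for `r ≠ 0`. -/
def mpow (A : Mat n) (r : ℝ) : Mat n := cfc (fun x : ℝ => x ^ r) A

/-- Matrix logarithm on the support (`Real.log 0 = 0`). -/
def mlog (A : Mat n) : Mat n := cfc Real.log A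

/-- Schatten `p`-norm `(Tr ((x* x)^(p/2)))^(1/p)`. -/
def snorm (p : ℝ) (x : Mat n) : ℝ := (traceR (mpow (xᴴ * x) (p/2))) ^ (1/p)

/-- Operator norm `‖x‖_∞`. -/
def opNorm (x : Mat n) : ℝ := ‖(Matrix.toEuclideanCLM (𝕜 := ℂ) x : EuclideanSpace ℂ n →L[ℂ] EuclideanSpace ℂ n)‖

/-- The support projection of `ρ` is dominated by that of `σ` (for positive
semidefinite matrices: `ker σ ⊆ ker ρ`). -/
def suppLe (ρ σ : Mat n) : Prop := ∀ v, σ.mulVec v = 0 → ρ.mulVec v = 0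

/-- `e` is the support projection of `ρ`. -/
def IsSupportProj (ρ e : Mat n) : Prop :=
  e.IsHermitian ∧ e * e = e ∧ ∀ v, e.mulVec v = 0 ↔ ρ.mulVec v = 0

/-- `D_∞(ρ‖σ) = log min {λ ≥ 0 | ρ ≤ λ σ}`, `⊤` if no such `λ` exists. -/
def Dinf (ρ σ : Mat n) : EReal :=
  if ∃ c : ℝ, 0 ≤ c ∧ (c • σ - ρ).PosSemidef then
    ((Real.log (sInf {c : ℝ | 0 ≤ c ∧ (c • σ - ρ).PosSemidef}) : ℝ) : EReal)
  else ⊤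

/-- Umegaki relative entropy `D(ρ‖σ) = Tr(ρ log ρ - ρ log σ)`, `⊤` if the
support condition fails. -/
def DU (ρ σ : Mat n) : EReal :=
  if suppLe ρ σ then ((traceR (ρ * mlog ρ - ρ * mlog σ) : ℝ) : EReal) else ⊤

/-- The sandwiched matrix `σ^{(1-p)/(2p)} ρ σ^{(1-p)/(2p)}`; note that for
`p > 1` the exponent `(1-p)/(2p)` equals `-1/(2p')` with `1/p + 1/p' = 1`. -/
def sandwich (p : ℝ) (ρ σ : Mat n) : Mat n :=
  mpow σ ((1 - p)/(2*p)) * ρ * mpow σ ((1 - p)/(2*p))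

/-- The sandwiched Rényi relative entropy `D_p(ρ‖σ)` for `p ∈ [1/2, ∞]`:
for `p ∈ (1,∞)` it is `p' log ‖σ^{-1/(2p')} ρ σ^{-1/(2p')}‖_p
= (p-1)⁻¹ log Tr ((σ^{-1/(2p')} ρ σ^{-1/(2p')})^p)` when the support of `ρ` is
dominated by that of `σ` and `⊤` otherwise; for `p ∈ [1/2, 1)` it is
`(p-1)⁻¹ log Tr ((σ^{(1-p)/(2p)} ρ σ^{(1-p)/(2p)})^p)` (`⊤` when the trace
vanishes, i.e. when the honest value is `+∞`); `D_1` is the Umegaki relative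
entropy and `D_∞` the max-relative entropy. -/
def Dp (p : ℝ≥0∞) (ρ σ : Mat n) : EReal :=
  if p = ⊤ then Dinf ρ σ
  else if p = 1 then DU ρ σ
  else if 1 < p.toReal ∧ ¬ suppLe ρ σ then ⊤
  else if traceR (mpow (sandwich p.toReal ρ σ) p.toReal) = 0 then ⊤
  else (((p.toReal - 1)⁻¹ * Real.log (traceR (mpow (sandwich p.toReal ρ σ) p.toReal)) : ℝ) : EReal)

/-- `D_p(ρ‖S) = inf { D_p(ρ‖σ) | σ a density in S }`. -/
def DpSet (p : ℝ≥0∞) (ρ : Mat n) (S : Set (Mat n)) : EReal :=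
  ⨅ σ ∈ {σ ∈ S | IsDensity σ}, Dp p ρ σ

/-- `D_p(A‖S) = sup { D_p(ρ‖S) | ρ a density in A }`. -/
def DpRel (p : ℝ≥0∞) (A S : Set (Mat n)) : EReal :=
  ⨆ ρ ∈ {ρ ∈ A | IsDensity ρ}, DpSet p ρ S

open scoped Kronecker in
/-- The algebraic tensor product `N₁ ⊗ N₂ ⊆ M_{n₁} ⊗ M_{n₂} = M_{n₁ × n₂}`,
realized as the linear span of Kronecker products. -/
def tensorSpan {n₁ n₂ : Type*} [Fintype n₁] [DecidableEq n₁] [Fintype n₂] [DecidableEq n₂]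
    (N₁ : Set (Mat n₁)) (N₂ : Set (Mat n₂)) : Set (Mat (n₁ × n₂)) :=
  ↑(Submodule.span ℂ {z : Mat (n₁ × n₂) | ∃ x ∈ N₁, ∃ y ∈ N₂, z = x ⊗ₖ y})

/-- `D_{p,cb}(M‖N) = sup_k D_p(M_k ⊗ M ‖ M_k ⊗ N)`. -/
def DpCb (p : ℝ≥0∞) (N : Set (Mat n)) : EReal :=
  ⨆ k : ℕ, DpRel p Set.univ (tensorSpan (Set.univ : Set (Mat (Fin k))) N)

/-- `E` is the trace preserving conditional expectation onto `N`, i.e. the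
orthogonal projection onto `N` with respect to the Hilbert–Schmidt inner
product `⟨x,y⟩ = Tr(x* y)`. -/
def IsCondExp (N : Set (Mat n)) (E : Mat n →ₗ[ℂ] Mat n) : Prop :=
  (∀ x, E x ∈ N) ∧ (∀ x ∈ N, E x = x) ∧
    ∀ x y, y ∈ N → ((E x)ᴴ * y).trace = (xᴴ * y).trace

/-- The Pimsner–Popa index constant
`λ(M:N) = max {c ≥ 0 | c x ≤ E(x) for all x ≥ 0}`. -/
def ppIndex (E : Mat n →ₗ[ℂ] Mat n) : ℝ :=
  sSup {c : ℝ | 0 ≤ c ∧ ∀ x : Mat n, x.PosSemidef → (E x - c • x).PosSemidef}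

/-- von Neumann entropy `H(ρ) = -Tr(ρ log ρ)`. -/
def vnEntropy (ρ : Mat n) : ℝ := - traceR (ρ * mlog ρ)

/-- The amplification `id_{M_k} ⊗ Φ` acting on `M_k ⊗ M_n = M_{k × n}`,
applying `Φ` blockwise. -/
def ampFun (k : Type*) [Fintype k] [DecidableEq k] (Φ : Mat n →ₗ[ℂ] Mat n)
    (X : Mat (k × n)) : Mat (k × n) :=
  Matrix.of fun a b => Φ (Matrix.of fun s t => X (a.1, s) (b.1, t)) a.2 b.2

/-- Complete positivity: all amplifications `id_{M_k} ⊗ Φ` preserve positive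
semidefiniteness. -/
def IsCP (Φ : Mat n →ₗ[ℂ] Mat n) : Prop :=
  ∀ (k : ℕ) (X : Mat (Fin k × n)), X.PosSemidef → (ampFun (Fin k) Φ X).PosSemidef

/-- Completely positive and trace preserving. -/
def IsCPTP (Φ : Mat n →ₗ[ℂ] Mat n) : Prop :=
  IsCP Φ ∧ ∀ x : Mat n, (Φ x).trace = x.trace

/-- The left regular representation matrix `λ(g)`: `λ(g) δ_h = δ_{gh}`. -/
def lreg {G : Type*} [Group G] [Fintype G] [DecidableEq G] (g : G) : Mat G :=
  Matrix.of fun a b => if a = g * b then (1 : ℂ) else 0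

/-- The span of `{λ(g) : g ∈ S}` inside `B(ℓ²(G)) ≅ M_{|G|}`. -/
def groupAlg {G : Type*} [Group G] [Fintype G] [DecidableEq G] (S : Set G) :
    Set (Mat G) :=
  ↑(Submodule.span ℂ {x : Mat G | ∃ g ∈ S, x = lreg g})

/-!
Upper bound: the conditional expectation `E` onto `L(H)` is the pinching to the blocks given by the
right cosets of `H`. The matrix `c E(ρ) - ρ` with `c = [G : H]` is the Schur product of `ρ` with a
positive matrix, so `ρ ≤ c E(ρ)` (the Pimsner–Popa inequality), and `D(ρ‖E(ρ)) ≤ log c` because the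
logarithm is operator monotone.

Lower bound: take for `ρ` the projection `P` onto the constants, a pure state in `L(G)`. Then
`Tr(P log P) = 0`, and concavity of the logarithm gives `D(P‖σ) = -Tr(P log σ) ≥ -log Tr(P σ)`.
For a density `σ` of `L(H)` only the entries inside the coset blocks survive, and bounding them by
the diagonal gives `Tr(P σ) ≤ |H| / |G|`.
-/

open scoped MatrixOrder

section SpectralTrace

variable {ρ σ A B : Mat n}

/-- The expectation `⟨uᵢ, A uᵢ⟩` of `A` in the `i`-th vector of the eigenbasis of `B`, through which
`A` enters `Tr (A f(B))`. -/
def eigenCoeff (A : Mat n) (hB : B.IsHermitian) (i : n) : ℝ :=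
  ((star (hB.eigenvectorUnitary : Mat n) * A * (hB.eigenvectorUnitary : Mat n)) i i).re

lemma traceR_mul_cfc (A : Mat n) (hB : B.IsHermitian) (f : ℝ → ℝ) :
    traceR (A * cfc f B) = ∑ i, f (hB.eigenvalues i) * eigenCoeff A hB i := by
  set U : Mat n := (hB.eigenvectorUnitary : Mat n) with hU
  have hcfc : cfc f B = U * diagonal (fun i => (f (hB.eigenvalues i) : ℂ)) * star U := by
    rw [hB.cfc_eq, IsHermitian.cfc, Unitary.conjStarAlgAut_apply]
    rfl
  have hcycle : (A * cfc f B).trace =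
      (star U * A * U * diagonal (fun i => (f (hB.eigenvalues i) : ℂ))).trace := by
    rw [hcfc, ← mul_assoc, trace_mul_comm]
    simp only [mul_assoc]
  rw [traceR, hcycle]
  simp only [Matrix.trace, diag_apply, mul_diagonal, Complex.re_sum, Complex.re_mul_ofReal,
    eigenCoeff, ← hU, mul_comm (f _)]

lemma eigenCoeff_nonneg (hA : 0 ≤ A) (hB : B.IsHermitian) (i : n) : 0 ≤ eigenCoeff A hB i :=
  (Complex.nonneg_iff.mp (hA.posSemidef.conjTranspose_mul_mul_same _).diag_nonneg).1

lemma eigenCoeff_eq_zero (hsupp : suppLe A B) (hB : B.IsHermitian) {i : n}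
    (hi : hB.eigenvalues i = 0) : eigenCoeff A hB i = 0 := by
  have hker : B *ᵥ ⇑(hB.eigenvectorBasis i) = 0 := by
    rw [hB.mulVec_eigenvectorBasis, hi, zero_smul]
  have hcol : (A * (hB.eigenvectorUnitary : Mat n)).col i = 0 := by
    rw [← hsupp _ hker]
    rfl
  have hentry : ∀ j, (A * (hB.eigenvectorUnitary : Mat n)) j i = 0 := congrFun hcol
  rw [eigenCoeff, mul_assoc, mul_apply]
  simp only [hentry, mul_zero, Finset.sum_const_zero, Complex.zero_re]

lemma traceR_mul_cfc_add_mul (A : Mat n) (hB : B.IsHermitian) (f g : ℝ → ℝ) (r : ℝ) :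
    traceR (A * cfc (fun x => f x + r * g x) B) =
      traceR (A * cfc f B) + r * traceR (A * cfc g B) := by
  simp only [traceR_mul_cfc A hB, add_mul, Finset.sum_add_distrib, Finset.mul_sum, mul_assoc]

lemma traceR_mul_cfc_const (hρ : IsDensity ρ) (hB : B.IsHermitian) (r : ℝ) :
    traceR (ρ * cfc (fun _ => r) B) = r := by
  simp [cfc_const r B hB.isSelfAdjoint, Algebra.algebraMap_eq_smul_one, traceR, hρ.2]

lemma traceR_mul_cfc_le_of_suppLe (hA : 0 ≤ A) (hB : 0 ≤ B) (hsupp : suppLe A B)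
    {f g : ℝ → ℝ} (hfg : ∀ x, 0 < x → f x ≤ g x) :
    traceR (A * cfc f B) ≤ traceR (A * cfc g B) := by
  have hBh := hB.posSemidef.isHermitian
  rw [traceR_mul_cfc A hBh, traceR_mul_cfc A hBh]
  refine Finset.sum_le_sum fun i _ => ?_
  rcases (hB.posSemidef.eigenvalues_nonneg i).eq_or_lt with hi | hi
  · simp only [eigenCoeff_eq_zero hsupp hBh hi.symm, mul_zero, le_refl]
  · exact mul_le_mul_of_nonneg_right (hfg _ hi) (eigenCoeff_nonneg hA hBh i)

lemma traceR_mul_nonneg (hA : 0 ≤ A) (hB : 0 ≤ B) : 0 ≤ traceR (A * B) := by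
  have hBh := hB.posSemidef.isHermitian
  rw [← cfc_id' ℝ B hBh.isSelfAdjoint, traceR_mul_cfc A hBh]
  exact Finset.sum_nonneg fun i _ =>
    mul_nonneg (hB.posSemidef.eigenvalues_nonneg i) (eigenCoeff_nonneg hA hBh i)

lemma traceR_sub (A B : Mat n) : traceR (A - B) = traceR A - traceR B := by
  simp only [traceR, trace_sub, Complex.sub_re]

lemma traceR_mul_le_traceR_mul_left {C : Mat n} (hA : 0 ≤ A) (hBC : B ≤ C) :
    traceR (A * B) ≤ traceR (A * C) := by
  have := traceR_mul_nonneg hA (sub_nonneg.mpr hBC)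
  rw [mul_sub, traceR_sub] at this
  exact sub_nonneg.mp this

end SpectralTrace

section RelativeEntropy

variable {ρ σ A B : Mat n}

lemma suppLe_of_le_smul (hρ : 0 ≤ ρ) {c : ℝ} (h : ρ ≤ c • σ) : suppLe ρ σ := by
  intro v hv
  have hle := (le_iff.mp h).dotProduct_mulVec_nonneg v
  rw [sub_mulVec, smul_mulVec, hv, smul_zero, zero_sub, dotProduct_neg, neg_nonneg] at hle
  exact (hρ.posSemidef.dotProduct_mulVec_zero_iff v).mp
    (le_antisymm hle (hρ.posSemidef.dotProduct_mulVec_nonneg v))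

open scoped Matrix.Norms.L2Operator in
lemma cfc_log_add_le_cfc_log_add (hA : 0 ≤ A) (hAB : A ≤ B) {ε : ℝ} (hε : 0 < ε) :
    cfc (fun x => Real.log (x + ε)) A ≤ cfc (fun x => Real.log (x + ε)) B := by
  have hshift : ∀ C : Mat n, 0 ≤ C →
      cfc (fun x => Real.log (x + ε)) C = CFC.log (C + algebraMap ℝ (Mat n) ε) := by
    intro C hC
    have hC' := hC.isSelfAdjoint
    rw [cfc_comp' Real.log (· + ε) C ((C.finite_real_spectrum.image _).continuousOn _),
      cfc_add_const ε (fun x => x) C, cfc_id' ℝ C, CFC.log]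
  rw [hshift A hA, hshift B (hA.trans hAB)]
  exact CFC.log_le_log (by gcongr) ((isStrictlyPositive_algebraMap hε).nonneg_add hA)

lemma log_mul_add_le {c x ε : ℝ} (hc : 0 < c) (hx : 0 < x) (hε : 0 < ε) :
    Real.log (c * x + ε) ≤ Real.log x + Real.log c * 1 + ε * (c * x)⁻¹ := by
  have hfactor : c * x + ε = x * c * (1 + ε * (c * x)⁻¹) := by field_simp
  rw [hfactor, Real.log_mul (by positivity) (by positivity), Real.log_mul hx.ne' hc.ne', mul_one]
  linarith [Real.log_le_sub_one_of_pos (x := 1 + ε * (c * x)⁻¹) (by positivity)]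

-- The shift by `ε` makes `ρ` strictly positive: for singular matrices `mlog` has the junk value
-- `log 0 = 0` on the kernel and is not operator monotone.
lemma traceR_mul_mlog_self_le_add (hρ : IsDensity ρ) (hσ : 0 ≤ σ) {c : ℝ} (hc : 0 < c)
    (h : ρ ≤ c • σ) {ε : ℝ} (hε : 0 < ε) :
    traceR (ρ * mlog ρ) ≤ traceR (ρ * mlog σ) + Real.log c
      + ε * traceR (ρ * cfc (fun x : ℝ => (c * x)⁻¹) σ) := by
  have hρ0 : 0 ≤ ρ := hρ.1.nonneg
  have hσh : σ.IsHermitian := hσ.posSemidef.isHermitian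
  calc traceR (ρ * mlog ρ)
      ≤ traceR (ρ * cfc (fun x => Real.log (x + ε)) ρ) :=
        traceR_mul_cfc_le_of_suppLe hρ0 hρ0 (fun _ hv => hv) fun x hx =>
          Real.log_le_log hx (by linarith)
    _ ≤ traceR (ρ * cfc (fun x => Real.log (x + ε)) (c • σ)) :=
        traceR_mul_le_traceR_mul_left hρ0 (cfc_log_add_le_cfc_log_add hρ0 h hε)
    _ = traceR (ρ * cfc (fun x => Real.log (c * x + ε)) σ) := by
        rw [cfc_comp_const_mul c (fun x => Real.log (x + ε)) σ
          ((σ.finite_real_spectrum.image _).continuousOn _) hσh.isSelfAdjoint]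
    _ ≤ traceR (ρ * cfc (fun x => Real.log x + Real.log c * 1 + ε * (c * x)⁻¹) σ) :=
        traceR_mul_cfc_le_of_suppLe hρ0 hσ (suppLe_of_le_smul hρ0 h) fun x hx =>
          log_mul_add_le hc hx hε
    _ = _ := by
        rw [traceR_mul_cfc_add_mul ρ hσh (fun x => Real.log x + Real.log c * 1),
          traceR_mul_cfc_add_mul ρ hσh Real.log, traceR_mul_cfc_const hρ hσh, mul_one, mlog]

lemma Dp_one (ρ σ : Mat n) : Dp 1 ρ σ = DU ρ σ := by
  rw [Dp, if_neg ENNReal.one_ne_top, if_pos rfl]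

theorem DU_le_log_of_le_smul (hρ : IsDensity ρ) (hσ : 0 ≤ σ) {c : ℝ} (hc : 0 < c)
    (h : ρ ≤ c • σ) : DU ρ σ ≤ (Real.log c : ℝ) := by
  have htendsto : Filter.Tendsto
      (fun ε : ℝ => traceR (ρ * mlog σ) + Real.log c
        + ε * traceR (ρ * cfc (fun x : ℝ => (c * x)⁻¹) σ))
      (nhdsWithin 0 (Set.Ioi 0)) (nhds (traceR (ρ * mlog σ) + Real.log c)) := by
    refine (Continuous.tendsto' ?_ 0 _ (by ring)).mono_left nhdsWithin_le_nhds
    fun_prop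
  have hle := ge_of_tendsto htendsto (Filter.eventually_of_mem self_mem_nhdsWithin
    fun ε hε => traceR_mul_mlog_self_le_add hρ hσ hc h hε)
  rw [DU, if_pos (suppLe_of_le_smul hρ.1.nonneg h), EReal.coe_le_coe_iff, traceR_sub]
  linarith

lemma traceR_mul_mlog_le_log (hρ : IsDensity ρ) (hσ : 0 ≤ σ) (hsupp : suppLe ρ σ) {t : ℝ}
    (ht : 0 < t) (h : traceR (ρ * σ) ≤ t) : traceR (ρ * mlog σ) ≤ Real.log t := by
  have hσh : σ.IsHermitian := hσ.posSemidef.isHermitian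
  have htangent : ∀ x, 0 < x → Real.log x ≤ (Real.log t - 1) + t⁻¹ * x := by
    intro x hx
    have := Real.log_le_sub_one_of_pos (x := t⁻¹ * x) (by positivity)
    rw [Real.log_mul (by positivity) hx.ne', Real.log_inv] at this
    linarith
  calc traceR (ρ * mlog σ)
      ≤ traceR (ρ * cfc (fun x => (Real.log t - 1) + t⁻¹ * x) σ) :=
        traceR_mul_cfc_le_of_suppLe hρ.1.nonneg hσ hsupp htangent
    _ = (Real.log t - 1) + t⁻¹ * traceR (ρ * σ) := by
        rw [traceR_mul_cfc_add_mul ρ hσh (fun _ => Real.log t - 1), traceR_mul_cfc_const hρ hσh,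
          cfc_id' ℝ σ hσh.isSelfAdjoint]
    _ ≤ Real.log t := by
        have := (inv_mul_le_one₀ ht).mpr h
        linarith

lemma mlog_eq_zero_of_isIdempotentElem (hA : IsIdempotentElem A) : mlog A = 0 := by
  rw [mlog, ← cfc_zero ℝ A]
  refine cfc_congr fun x hx => ?_
  rcases hA.spectrum_subset ℝ hx with rfl | rfl
  · exact Real.log_zero
  · exact Real.log_one

theorem neg_log_le_DU_of_isIdempotentElem (hρ : IsDensity ρ) (hρi : IsIdempotentElem ρ)
    (hσ : 0 ≤ σ) {t : ℝ} (ht : 0 < t) (h : traceR (ρ * σ) ≤ t) :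
    ((-Real.log t : ℝ) : EReal) ≤ DU ρ σ := by
  by_cases hsupp : suppLe ρ σ
  · rw [DU, if_pos hsupp, EReal.coe_le_coe_iff, mlog_eq_zero_of_isIdempotentElem hρi, mul_zero,
      traceR_sub]
    have := traceR_mul_mlog_le_log hρ hσ hsupp ht h
    simp only [traceR, trace_zero, Complex.zero_re] at this ⊢
    linarith
  · rw [DU, if_neg hsupp]
    exact le_top

end RelativeEntropy

section AveragingProjection

/-- The orthogonal projection of `ℓ²(n)` onto the constant functions: all entries are `1 / |n|`. -/
def avgProj (n : Type*) [Fintype n] [DecidableEq n] : Mat n :=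
  of fun _ _ => (Fintype.card n : ℂ)⁻¹

lemma isStarProjection_avgProj : IsStarProjection (avgProj n) where
  isIdempotentElem := by
    ext a b
    have hcard : (Fintype.card n : ℂ) ≠ 0 :=
      Nat.cast_ne_zero.mpr (Fintype.card_pos_iff.mpr ⟨a⟩).ne'
    simp only [avgProj, mul_apply, of_apply, Finset.sum_const, Finset.card_univ, nsmul_eq_mul]
    exact mul_inv_cancel_left₀ hcard _
  isSelfAdjoint := by
    ext a b
    simp [avgProj]

lemma isDensity_avgProj [Nonempty n] : IsDensity (avgProj n) := by
  refine ⟨isStarProjection_avgProj.nonneg.posSemidef, ?_⟩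
  simp [avgProj, Matrix.trace]

lemma traceR_avgProj_mul (A : Mat n) :
    traceR (avgProj n * A) = (Fintype.card n : ℝ)⁻¹ * ∑ a, ∑ b, (A a b).re := by
  have htrace : (avgProj n * A).trace = ((Fintype.card n : ℝ)⁻¹ : ℝ) * ∑ a, ∑ b, A a b := by
    simp only [Matrix.trace, diag_apply, mul_apply, avgProj, of_apply, Complex.ofReal_inv,
      Complex.ofReal_natCast, ← Finset.mul_sum]
    rw [Finset.sum_comm]
  simp only [traceR, htrace, Complex.re_ofReal_mul, Complex.re_sum]

end AveragingProjection

section Pinching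

variable {K : Type*} [DecidableEq K] (κ : n → K)

/-- The pinching (block-diagonal truncation) along the partition of `n` into the fibres of `κ`. For
`κ` the labelling of `G` by right cosets of `H`, its restriction to `L(G)` is the conditional
expectation onto `L(H)`. -/
def pinch (A : Mat n) : Mat n := of fun a b => if κ a = κ b then A a b else 0

lemma pinch_eq_hadamard (A : Mat n) : pinch κ A = A ⊙ (1 : Matrix K K ℂ).submatrix κ κ := by
  ext a b
  simp [pinch, one_apply]

lemma trace_pinch (A : Mat n) : (pinch κ A).trace = A.trace := by
  simp [pinch, Matrix.trace]

lemma pinch_nonneg {A : Mat n} (hA : 0 ≤ A) : 0 ≤ pinch κ A := by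
  rw [pinch_eq_hadamard]
  exact (hA.posSemidef.hadamard (PosSemidef.one.submatrix κ)).nonneg

lemma isDensity_pinch {A : Mat n} (hA : IsDensity A) : IsDensity (pinch κ A) :=
  ⟨(pinch_nonneg κ hA.1.nonneg).posSemidef, (trace_pinch κ A).trans hA.2⟩

theorem le_card_smul_pinch [Fintype K] {A : Mat n} (hA : 0 ≤ A) :
    A ≤ (Fintype.card K : ℝ) • pinch κ A := by
  have hsub : (Fintype.card K : ℝ) • pinch κ A - A =
      A ⊙ ((Fintype.card K : ℝ) • (1 - avgProj K)).submatrix κ κ := by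
    ext a b
    have hcard : (Fintype.card K : ℂ) ≠ 0 :=
      Nat.cast_ne_zero.mpr (Fintype.card_pos_iff.mpr ⟨κ a⟩).ne'
    by_cases h : κ a = κ b <;> simp [pinch, avgProj, one_apply, h, mul_sub, hcard, mul_comm]
  rw [le_iff, hsub]
  exact hA.posSemidef.hadamard
    ((isStarProjection_avgProj.one_sub_nonneg.posSemidef.smul (by positivity)).submatrix κ)

lemma two_mul_re_apply_le_add {A : Mat n} (hA : A.PosSemidef) (a b : n) :
    2 * (A a b).re ≤ (A a a).re + (A b b).re := by
  have hform : 0 ≤ (A a a).re - (A a b).re - ((A b a).re - (A b b).re) := by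
    simpa [dotProduct, mulVec, Fin.sum_univ_two, sub_eq_add_neg, add_comm, add_left_comm] using
      (Complex.nonneg_iff.mp ((hA.submatrix ![a, b]).dotProduct_mulVec_nonneg ![1, -1])).1
  have hsymm : (A b a).re = (A a b).re := by
    rw [← hA.isHermitian.apply a b, Complex.star_def, Complex.conj_re]
  linarith

lemma sum_re_pinch_le {A : Mat n} (hA : A.PosSemidef) {m : ℕ}
    (hfibre : ∀ a, (Finset.univ.filter fun b => κ a = κ b).card ≤ m) :
    ∑ a, ∑ b, (pinch κ A a b).re ≤ m * traceR A := by
  have hdiag : ∀ a, 0 ≤ (A a a).re := fun a => (Complex.nonneg_iff.mp hA.diag_nonneg).1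
  set S : ℝ := ∑ a, ∑ b, if κ a = κ b then (A a a).re else 0 with hS
  have hS_swap : S = ∑ a, ∑ b, if κ a = κ b then (A b b).re else 0 := by
    rw [hS, Finset.sum_comm]
    simp only [eq_comm]
  have hentry : ∀ a b, 2 * (pinch κ A a b).re ≤
      (if κ a = κ b then (A a a).re else 0) + (if κ a = κ b then (A b b).re else 0) := by
    intro a b
    by_cases h : κ a = κ b
    · simpa only [pinch, of_apply, if_pos h] using two_mul_re_apply_le_add hA a b
    · simp only [pinch, of_apply, if_neg h, Complex.zero_re, mul_zero, add_zero, le_refl]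
  have htwo : 2 * ∑ a, ∑ b, (pinch κ A a b).re ≤ S + S := by
    calc 2 * ∑ a, ∑ b, (pinch κ A a b).re
        ≤ ∑ a, ∑ b, ((if κ a = κ b then (A a a).re else 0)
            + if κ a = κ b then (A b b).re else 0) := by
          simp only [Finset.mul_sum]
          exact Finset.sum_le_sum fun a _ => Finset.sum_le_sum fun b _ => hentry a b
      _ = S + S := by
          simp only [Finset.sum_add_distrib]
          rw [← hS, ← hS_swap]
  calc ∑ a, ∑ b, (pinch κ A a b).re ≤ S := by linarith
    _ = ∑ a, ((Finset.univ.filter fun b => κ a = κ b).card : ℝ) * (A a a).re := by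
        simp only [hS, ← Finset.sum_filter, Finset.sum_const, nsmul_eq_mul]
    _ ≤ ∑ a, m * (A a a).re := by
        gcongr with a
        · exact hdiag a
        · exact_mod_cast hfibre a
    _ = m * traceR A := by
        simp only [traceR, Matrix.trace, diag_apply, Complex.re_sum, Finset.mul_sum]

end Pinching

section GroupAlgebra

variable {G : Type*} [Group G] {H : Subgroup G}

/-- The right coset `H a` of `a`, encoded as the left coset `a⁻¹ H` because `G ⧸ H` is the type of
left cosets. The entry `(a, b)` of an element of `L(G)` sits over `a * b⁻¹`, so it is right cosets
that block-diagonalize `L(H)`. -/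
def rightCosetLabel (H : Subgroup G) (a : G) : G ⧸ H := (a⁻¹ : G)

lemma rightCosetLabel_eq_iff {a b : G} :
    rightCosetLabel H a = rightCosetLabel H b ↔ a * b⁻¹ ∈ H := by
  rw [rightCosetLabel, rightCosetLabel, QuotientGroup.eq, inv_inv]

variable [Fintype G]

lemma card_rightCosetLabel_fibre_le (a : G) :
    (Finset.univ.filter fun b => rightCosetLabel H a = rightCosetLabel H b).card ≤ Nat.card H := by
  rw [Nat.card_eq_fintype_card, Fintype.card_subtype]
  refine Finset.card_le_card_of_injOn (fun b => a * b⁻¹) (fun b hb => ?_) fun b _ c _ h => ?_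
  · simpa [rightCosetLabel_eq_iff] using hb
  · simpa using h

variable [DecidableEq G]

lemma sum_smul_lreg_apply (φ : G → ℂ) (a b : G) :
    (∑ g, φ g • lreg g) a b = φ (a * b⁻¹) := by
  rw [Matrix.sum_apply]
  simp only [Matrix.smul_apply, lreg, of_apply]
  simp [← mul_inv_eq_iff_eq_mul]

lemma mem_groupAlg_iff {S : Set G} {x : Mat G} :
    x ∈ groupAlg S ↔
      ∃ φ : G → ℂ, Function.support φ ⊆ S ∧ ∀ a b, x a b = φ (a * b⁻¹) := by
  have himage : {x : Mat G | ∃ g ∈ S, x = lreg g} = lreg '' S := by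
    simp only [Set.image, eq_comm]
  rw [groupAlg, himage, SetLike.mem_coe, Finsupp.mem_span_image_iff_linearCombination]
  simp only [Finsupp.linearCombination_apply, zero_smul, implies_true, Finsupp.sum_fintype]
  constructor
  · rintro ⟨φ, hφ, rfl⟩
    exact ⟨φ, by simpa [Finsupp.mem_supported] using hφ, sum_smul_lreg_apply φ⟩
  · rintro ⟨φ, hφ, hx⟩
    refine ⟨Finsupp.equivFunOnFinite.symm φ, by simpa [Finsupp.mem_supported] using hφ, ?_⟩
    ext a b
    exact (sum_smul_lreg_apply φ a b).trans (hx a b).symm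

lemma avgProj_mem_groupAlg_univ : avgProj G ∈ groupAlg (Set.univ : Set G) :=
  mem_groupAlg_iff.mpr ⟨fun _ => (Fintype.card G : ℂ)⁻¹, Set.subset_univ _, fun _ _ => rfl⟩

lemma pinch_mem_groupAlg {x : Mat G} (hx : x ∈ groupAlg (Set.univ : Set G)) :
    pinch (rightCosetLabel H) x ∈ groupAlg (H : Set G) := by
  obtain ⟨φ, -, hφ⟩ := mem_groupAlg_iff.mp hx
  refine mem_groupAlg_iff.mpr ⟨(H : Set G).indicator φ, Set.support_indicator_subset, fun a b => ?_⟩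
  simp only [pinch, of_apply, rightCosetLabel_eq_iff, hφ, Set.indicator_apply, SetLike.mem_coe]

lemma pinch_eq_self_of_mem_groupAlg {x : Mat G} (hx : x ∈ groupAlg (H : Set G)) :
    pinch (rightCosetLabel H) x = x := by
  obtain ⟨φ, hsupp, hφ⟩ := mem_groupAlg_iff.mp hx
  ext a b
  simp only [pinch, of_apply, rightCosetLabel_eq_iff, hφ, ite_eq_left_iff]
  exact fun hab => (Function.notMem_support.mp fun h => hab (hsupp h)).symm

lemma traceR_avgProj_mul_le {σ : Mat G} (hσ : σ ∈ groupAlg (H : Set G)) (hσd : IsDensity σ) :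
    traceR (avgProj G * σ) ≤ (H.index : ℝ)⁻¹ := by
  have hsum := sum_re_pinch_le (rightCosetLabel H) hσd.1 card_rightCosetLabel_fibre_le
  have htr : traceR σ = 1 := by rw [traceR, hσd.2, Complex.one_re]
  have hcard : (Fintype.card G : ℝ) = Nat.card H * H.index := by
    rw [← Nat.card_eq_fintype_card, ← H.card_mul_index, Nat.cast_mul]
  have hH : (0 : ℝ) < Nat.card H := Nat.cast_pos.mpr Nat.card_pos
  rw [pinch_eq_self_of_mem_groupAlg hσ, htr, mul_one] at hsum
  calc traceR (avgProj G * σ) ≤ (Fintype.card G : ℝ)⁻¹ * Nat.card H := by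
        rw [traceR_avgProj_mul]
        gcongr
    _ = (H.index : ℝ)⁻¹ := by
        rw [hcard]
        field_simp

lemma le_index_smul_pinch {ρ : Mat G} (hρ : 0 ≤ ρ) :
    ρ ≤ (H.index : ℝ) • pinch (rightCosetLabel H) ρ := by
  rw [Subgroup.index, Nat.card_eq_fintype_card]
  exact le_card_smul_pinch _ hρ

end GroupAlgebra

/-- for a finite group `G` and a subgroup `H ≤ G`, with
`L(G) = span λ(G)` and `L(H) = span λ(H)` inside `B(ℓ²(G)) ≅ M_{|G|}`,
`D(L(G)‖L(H)) = log [G : H]`. -/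
theorem statement13 (G : Type) [Group G] [Fintype G] [DecidableEq G]
    (H : Subgroup G) :
    DpRel 1 (groupAlg (Set.univ : Set G)) (groupAlg (H : Set G))
      = ((Real.log (H.index : ℝ) : ℝ) : EReal) := by
  have hindex : (0 : ℝ) < H.index := Nat.cast_pos.mpr (Nat.pos_of_ne_zero H.index_ne_zero_of_finite)
  simp only [DpRel, DpSet, Dp_one]
  apply le_antisymm
  · refine iSup₂_le fun ρ ⟨hρ, hρd⟩ => ?_
    calc ⨅ σ ∈ {σ ∈ groupAlg (H : Set G) | IsDensity σ}, DU ρ σ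
        ≤ DU ρ (pinch (rightCosetLabel H) ρ) :=
          iInf₂_le _ ⟨pinch_mem_groupAlg hρ, isDensity_pinch _ hρd⟩
      _ ≤ (Real.log H.index : ℝ) :=
          DU_le_log_of_le_smul hρd (pinch_nonneg _ hρd.1.nonneg) hindex
            (le_index_smul_pinch hρd.1.nonneg)
  · refine le_iSup₂_of_le (avgProj G) ⟨avgProj_mem_groupAlg_univ, isDensity_avgProj⟩ ?_
    refine le_iInf₂ fun σ ⟨hσ, hσd⟩ => ?_
    rw [← neg_neg (Real.log _), ← Real.log_inv]
    exact neg_log_le_DU_of_isIdempotentElem isDensity_avgProj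
      isStarProjection_avgProj.isIdempotentElem hσd.1.nonneg (inv_pos.mpr hindex)
      (traceR_avgProj_mul_le hσ hσd)

end GJL
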